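/- arXiv:2403.03589 — 6 statements merged into one kernel-verified Lean document; each statement's English description precedes it below -/
import Mathlib

section
/- Let (𝒳, μ) be a measure space, let g : 𝒳 → [0,∞) be measurable, and let q, p : 𝒳 → [0,∞) be measurable probability densities with respect to μ (i.e., ∫ q dμ = 1 and ∫ p dμ = 1), with p(x) > 0 for μ-a.e. x in {q > 0}. If √g · q is μ-integrable, then ∫ g(x) q(x)²/p(x) dμ(x) ≥ (∫ √(g(x)) q(x) dμ(x))². -/
open MeasureTheory

/-- Inequality half of the efficient covariate density theorem: for a nonnegative
measurable `g`, probability densities `q, p` with respect to `μ` with `p > 0` a.e. on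
`{q > 0}`, if `√g · q` is integrable then
`∫ g q²/p dμ ≥ (∫ √g q dμ)²`. -/
theorem covariate_density_lower_bound
    {𝒳 : Type*} [MeasurableSpace 𝒳] (μ : Measure 𝒳)
    (g q p : 𝒳 → ℝ)
    (hgm : Measurable g) (hg0 : ∀ x, 0 ≤ g x)
    (hqm : Measurable q) (hq0 : ∀ x, 0 ≤ q x)
    (hpm : Measurable p) (hp0 : ∀ x, 0 ≤ p x)
    (hqint : Integrable q μ) (hq1 : ∫ x, q x ∂μ = 1)
    (hpint : Integrable p μ) (hp1 : ∫ x, p x ∂μ = 1)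
    (hppos : ∀ᵐ x ∂μ, 0 < q x → 0 < p x)
    (hsg : Integrable (fun x => Real.sqrt (g x) * q x) μ) :
    ENNReal.ofReal ((∫ x, Real.sqrt (g x) * q x ∂μ) ^ 2) ≤
      ∫⁻ x, ENNReal.ofReal (g x * q x ^ 2 / p x) ∂μ := by
  by_cases htop : ∫⁻ x, ENNReal.ofReal (g x * q x ^ 2 / p x) ∂μ = ⊤
  · rw [htop]; exact le_top
  have hF0 : ∀ x, 0 ≤ g x * q x ^ 2 / p x := fun x =>
    div_nonneg (mul_nonneg (hg0 x) (sq_nonneg _)) (hp0 x)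
  have hFm : Measurable (fun x => g x * q x ^ 2 / p x) :=
    (hgm.mul (hqm.pow_const 2)).div hpm
  have hF : Integrable (fun x => g x * q x ^ 2 / p x) μ :=
    (lintegral_ofReal_ne_top_iff_integrable hFm.aestronglyMeasurable
      (Filter.Eventually.of_forall hF0)).1 htop
  rw [← ofReal_integral_eq_lintegral_ofReal hF (Filter.Eventually.of_forall hF0)]
  apply ENNReal.ofReal_le_ofReal
  set I := ∫ x, Real.sqrt (g x) * q x ∂μ with hI
  have key : ∫ x, (2 * I * (Real.sqrt (g x) * q x) - I ^ 2 * p x) ∂μ ≤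
      ∫ x, g x * q x ^ 2 / p x ∂μ := by
    apply integral_mono_ae ((hsg.const_mul _).sub (hpint.const_mul _)) hF
    filter_upwards [hppos] with x hx
    rcases (hp0 x).eq_or_lt with h | h
    · have hq : q x = 0 := by
        by_contra hne
        have := hx (lt_of_le_of_ne (hq0 x) (Ne.symm hne))
        linarith
      simp [hq, ← h]
    · show 2 * I * (Real.sqrt (g x) * q x) - I ^ 2 * p x ≤ g x * q x ^ 2 / p x
      rw [le_div_iff₀ h]
      have hs := Real.sq_sqrt (hg0 x)
      have : g x * q x ^ 2 = (Real.sqrt (g x) * q x) ^ 2 := by rw [mul_pow, hs]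
      rw [this]
      nlinarith [sq_nonneg (Real.sqrt (g x) * q x - I * p x)]
  rw [integral_sub (hsg.const_mul _) (hpint.const_mul _), integral_const_mul,
    integral_const_mul, hp1, ← hI] at key
  linarith
end

section
/- Let (𝒳, μ) be a measure space, let g : 𝒳 → [0,∞) be measurable, and let q : 𝒳 → [0,∞) be a measurable probability density with respect to μ. Assume 0 < ∫ √(g) q dμ < ∞ and that g(x) > 0 for μ-a.e. x in {q > 0}. Define p*(x) = √(g(x)) q(x) / ∫ √(g) q dμ. Then p* is a probability density with respect to μ, and ∫ g(x) q(x)²/p*(x) dμ(x) = (∫ √(g(x)) q(x) dμ(x))², i.e., p* attains the lower bound (∫ √g q dμ)² of the functional p ↦ ∫ g q²/p dμ over probability densities. -/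
open MeasureTheory

/-- Attainment half of the efficient covariate density theorem: under
`0 < ∫ √g q dμ < ∞` and `g > 0` a.e. on `{q > 0}`, the density
`p*(x) = √(g x) q x / ∫ √g q dμ` is a probability density and attains the lower bound:
`∫ g q²/p* dμ = (∫ √g q dμ)²`. -/
theorem efficient_covariate_density_attains
    {𝒳 : Type*} [MeasurableSpace 𝒳] (μ : Measure 𝒳)
    (g q : 𝒳 → ℝ)
    (hgm : Measurable g) (hg0 : ∀ x, 0 ≤ g x)
    (hqm : Measurable q) (hq0 : ∀ x, 0 ≤ q x)
    (hqint : Integrable q μ) (hq1 : ∫ x, q x ∂μ = 1)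
    (hsgint : Integrable (fun x => Real.sqrt (g x) * q x) μ)
    (hpos : 0 < ∫ x, Real.sqrt (g x) * q x ∂μ)
    (hgpos : ∀ᵐ x ∂μ, 0 < q x → 0 < g x) :
    (∫ x, Real.sqrt (g x) * q x / (∫ y, Real.sqrt (g y) * q y ∂μ) ∂μ = 1) ∧
    ∫ x, g x * q x ^ 2 /
        (Real.sqrt (g x) * q x / (∫ y, Real.sqrt (g y) * q y ∂μ)) ∂μ =
      (∫ x, Real.sqrt (g x) * q x ∂μ) ^ 2 := by
  refine ⟨?_, ?_⟩
  · rw [integral_div, div_self hpos.ne']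
  · set C := ∫ y, Real.sqrt (g y) * q y ∂μ with hC
    have h : ∀ x, g x * q x ^ 2 / (Real.sqrt (g x) * q x / C) = C * (Real.sqrt (g x) * q x) := by
      intro x
      have hs : g x * q x ^ 2 = (Real.sqrt (g x) * q x) * (Real.sqrt (g x) * q x) := by
        have := Real.mul_self_sqrt (hg0 x)
        calc g x * q x ^ 2 = (Real.sqrt (g x) * Real.sqrt (g x)) * q x ^ 2 := by rw [this]
          _ = _ := by ring
      rw [hs]
      generalize Real.sqrt (g x) * q x = a
      have hC0 : C ≠ 0 := hpos.ne'
      by_cases ha : a = 0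
      · simp [ha]
      · field_simp
    simp_rw [h]
    rw [integral_const_mul, ← hC, sq]
end

section
/- Let (𝒳, μ) be a measure space, let σ₁, σ₀ : 𝒳 → (0,∞) be measurable, and let q : 𝒳 → [0,∞) be a measurable probability density with respect to μ with (σ₁+σ₀)q μ-integrable. Then for every measurable w : 𝒳 → (0,1) and every measurable probability density p : 𝒳 → [0,∞) with p > 0 μ-a.e. on {q > 0}, it holds that ∫ (σ₁(x)²/w(x) + σ₀(x)²/(1−w(x))) · q(x)²/p(x) dμ(x) ≥ (∫ (σ₁(x)+σ₀(x)) q(x) dμ(x))². That is, the pair (w*, p*) with w*(x) = σ₁(x)/(σ₁(x)+σ₀(x)) and p*(x) ∝ (σ₁(x)+σ₀(x)) q(x) minimizes the semiparametric efficiency bound jointly over propensity scores and covariate densities. -/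
open MeasureTheory

/-- Joint minimization of the semiparametric efficiency bound: for every measurable
propensity score `w : 𝒳 → (0,1)` and every probability density `p` with `p > 0` a.e. on
`{q > 0}`, `∫ (σ₁²/w + σ₀²/(1−w)) q²/p dμ ≥ (∫ (σ₁+σ₀) q dμ)²`. -/
theorem joint_minimization_lower_bound
    {𝒳 : Type*} [MeasurableSpace 𝒳] (μ : Measure 𝒳)
    (σ₁ σ₀ q : 𝒳 → ℝ)
    (hσ₁m : Measurable σ₁) (hσ₀m : Measurable σ₀)
    (hσ₁ : ∀ x, 0 < σ₁ x) (hσ₀ : ∀ x, 0 < σ₀ x)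
    (hqm : Measurable q) (hq0 : ∀ x, 0 ≤ q x)
    (hqint : Integrable q μ) (hq1 : ∫ x, q x ∂μ = 1)
    (hint : Integrable (fun x => (σ₁ x + σ₀ x) * q x) μ) :
    ∀ w : 𝒳 → ℝ, Measurable w → (∀ x, w x ∈ Set.Ioo (0 : ℝ) 1) →
    ∀ p : 𝒳 → ℝ, Measurable p → (∀ x, 0 ≤ p x) → Integrable p μ →
      (∫ x, p x ∂μ = 1) → (∀ᵐ x ∂μ, 0 < q x → 0 < p x) →
      ENNReal.ofReal ((∫ x, (σ₁ x + σ₀ x) * q x ∂μ) ^ 2) ≤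
        ∫⁻ x, ENNReal.ofReal
          ((σ₁ x ^ 2 / w x + σ₀ x ^ 2 / (1 - w x)) * (q x ^ 2 / p x)) ∂μ := by
  intro w hwm hw p hpm hp0 hpint hp1 hpq
  set c := ∫ x, (σ₁ x + σ₀ x) * q x ∂μ with hc
  have hI : Integrable (fun x => 2 * c * ((σ₁ x + σ₀ x) * q x) - c ^ 2 * p x) μ :=
    (hint.const_mul _).sub (hpint.const_mul _)
  have hE : ∫ x, (2 * c * ((σ₁ x + σ₀ x) * q x) - c ^ 2 * p x) ∂μ = c ^ 2 := by
    rw [integral_sub (hint.const_mul _) (hpint.const_mul _), integral_const_mul,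
      integral_const_mul, hp1, ← hc]
    ring
  have h1 : ENNReal.ofReal (c ^ 2) ≤
      ∫⁻ x, ENNReal.ofReal (2 * c * ((σ₁ x + σ₀ x) * q x) - c ^ 2 * p x) ∂μ := by
    apply ENNReal.ofReal_le_of_le_toReal
    refine hE.symm.le.trans ?_
    rw [integral_eq_lintegral_pos_part_sub_lintegral_neg_part hI]
    exact sub_le_self _ ENNReal.toReal_nonneg
  refine h1.trans (lintegral_mono_ae ?_)
  filter_upwards [hpq] with x hx
  apply ENNReal.ofReal_le_ofReal
  rcases (hq0 x).eq_or_lt with h | h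
  · rw [← h]
    have := mul_nonneg (sq_nonneg c) (hp0 x)
    simp
    exact this
  · have hp := hx h
    obtain ⟨hw0, hw1⟩ := hw x
    have hw2 : 0 < 1 - w x := by linarith
    have hA : (σ₁ x + σ₀ x) ^ 2 ≤ σ₁ x ^ 2 / w x + σ₀ x ^ 2 / (1 - w x) := by
      rw [div_add_div _ _ hw0.ne' hw2.ne', le_div_iff₀ (mul_pos hw0 hw2)]
      nlinarith [sq_nonneg (σ₁ x * (1 - w x) - σ₀ x * w x)]
    refine le_trans ?_ (mul_le_mul_of_nonneg_right hA (by positivity))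
    rw [← mul_div_assoc, le_div_iff₀ hp]
    nlinarith [sq_nonneg ((σ₁ x + σ₀ x) * q x - c * p x)]
end

section
/- Let Q and P be probability measures on a measurable space 𝒳 with densities q and p with respect to a common σ-finite measure μ, with p > 0 μ-a.e. on {q > 0} and q/p bounded P-a.e. Let X ∼ P; given X, let A ∈ {0,1} satisfy P(A=1|X) = w(1|X) and P(A=0|X) = w(0|X) = 1 − w(1|X), with c ≤ w(1|X) ≤ 1−c for a constant c ∈ (0,1/2); let Y(1), Y(0) be potential outcomes with E[Y(a)|X] = μ₀(a)(X), integrable, and conditionally mean-independent of A given X; let Y = 1[A=1]Y(1) + 1[A=0]Y(0). For any bounded measurable μ̂(1), μ̂(0) : 𝒳 → ℝ with μ₀(1), μ₀(0) Q-integrable, the AIPWIW score Ψ = (1[A=1](Y − μ̂(1)(X))/w(1|X) − 1[A=0](Y − μ̂(0)(X))/w(0|X)) · q(X)/p(X) + ∫(μ̂(1) − μ̂(0)) dQ satisfies E[Ψ] = ∫ (μ₀(1) − μ₀(0)) dQ = θ₀, i.e., the importance-weighted augmented inverse probability weighting score is an unbiased estimate of the average treatment effect over Q, provided μ₀(a)·(q/p)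 is P-integrable. -/
open MeasureTheory

lemma aux_cond {𝒳 : Type*} [MeasurableSpace 𝒳] {Ω : Type*} {mΩ : MeasurableSpace Ω}
    (Pr : Measure Ω) [IsProbabilityMeasure Pr] (P : Measure 𝒳)
    (X : Ω → 𝒳) (hX : Measurable X) (hXlaw : Measure.map X Pr = P)
    (Z : Ω → ℝ) (hZ : Integrable Z Pr) (h g : 𝒳 → ℝ) (hh : Measurable h) (hg : Measurable g)
    (hc : Pr[Z | MeasurableSpace.comap X inferInstance] =ᵐ[Pr] fun ω => h (X ω))
    (B : ℝ) (hB : ∀ᵐ x ∂P, |g x| ≤ B) :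
    Integrable (fun ω => Z ω * g (X ω)) Pr ∧
      ∫ ω, Z ω * g (X ω) ∂Pr = ∫ x, h x * g x ∂P := by
  have hB' : ∀ᵐ ω ∂Pr, ‖g (X ω)‖ ≤ B := by
    rw [← hXlaw] at hB
    exact ae_of_ae_map hX.aemeasurable hB
  have hint : Integrable (fun ω => Z ω * g (X ω)) Pr :=
    hZ.mul_bdd (hg.comp hX).aestronglyMeasurable hB'
  refine ⟨hint, ?_⟩
  have hsm : StronglyMeasurable[MeasurableSpace.comap X inferInstance] (fun ω => g (X ω)) :=
    (hg.comp (comap_measurable X)).stronglyMeasurable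
  have h1 := condExp_mul_of_stronglyMeasurable_right hsm hint hZ
  have h2 := integral_condExp (μ := Pr) (f := fun ω => Z ω * g (X ω)) hX.comap_le
  rw [← h2, ← hXlaw, integral_map hX.aemeasurable (by fun_prop)]
  refine integral_congr_ae ?_
  filter_upwards [h1, hc] with ω a b
  rw [← b]
  exact a

lemma aux_density {𝒳 : Type*} [MeasurableSpace 𝒳] (μ : Measure 𝒳)
    (q p : 𝒳 → ℝ) (hqm : Measurable q) (hq0 : ∀ x, 0 ≤ q x)
    (hpm : Measurable p) (hp0 : ∀ x, 0 ≤ p x)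
    (hppos : ∀ᵐ x ∂μ, 0 < q x → 0 < p x) (f : 𝒳 → ℝ) :
    ∫ x, f x * (q x / p x) ∂(μ.withDensity fun x => ENNReal.ofReal (p x))
      = ∫ x, f x ∂(μ.withDensity fun x => ENNReal.ofReal (q x)) := by
  rw [integral_withDensity_eq_integral_toReal_smul (by fun_prop) (by simp),
    integral_withDensity_eq_integral_toReal_smul (by fun_prop) (by simp)]
  refine integral_congr_ae ?_
  filter_upwards [hppos] with x hx
  simp only [ENNReal.toReal_ofReal (hq0 x), ENNReal.toReal_ofReal (hp0 x), smul_eq_mul]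
  rcases (hq0 x).eq_or_lt with h | h
  · simp [← h]
  · have := (hx h).ne'
    field_simp

lemma aux_arm {𝒳 : Type*} [MeasurableSpace 𝒳] {Ω : Type*} {mΩ : MeasurableSpace Ω}
    (Pr : Measure Ω) [IsProbabilityMeasure Pr] (P : Measure 𝒳)
    (X : Ω → 𝒳) (hX : Measurable X) (hXlaw : Measure.map X Pr = P)
    (I Z : Ω → ℝ) (hI : Integrable I Pr) (hZ : Integrable Z Pr)
    (v m mh r : 𝒳 → ℝ) (hv : Measurable v) (hm : Measurable m) (hmh : Measurable mh)
    (hr : Measurable r) (c : ℝ) (hc : 0 < c) (hvc : ∀ x, c ≤ v x)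
    (C : ℝ) (hC : ∀ x, |mh x| ≤ C) (M : ℝ) (hr0 : ∀ x, 0 ≤ r x) (hM : ∀ᵐ x ∂P, r x ≤ M)
    (hcI : Pr[I | MeasurableSpace.comap X inferInstance] =ᵐ[Pr] fun ω => v (X ω))
    (hcZ : Pr[Z | MeasurableSpace.comap X inferInstance] =ᵐ[Pr] fun ω => v (X ω) * m (X ω)) :
    Integrable (fun ω => Z ω * (r (X ω) / v (X ω)) - I ω * (mh (X ω) * (r (X ω) / v (X ω)))) Pr ∧
      ∫ ω, (Z ω * (r (X ω) / v (X ω)) - I ω * (mh (X ω) * (r (X ω) / v (X ω)))) ∂Pr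
        = ∫ x, m x * r x ∂P - ∫ x, mh x * r x ∂P := by
  have hb : ∀ᵐ x ∂P, |r x / v x| ≤ M / c := by
    filter_upwards [hM] with x hx
    have := hvc x
    have h0 := hr0 x
    rw [abs_of_nonneg (div_nonneg h0 (hc.le.trans this))]
    exact div_le_div₀ (h0.trans hx) hx hc this
  have hb2 : ∀ᵐ x ∂P, |mh x * (r x / v x)| ≤ C * (M / c) := by
    filter_upwards [hb] with x hx
    rw [abs_mul]
    exact mul_le_mul (hC x) hx (abs_nonneg _) ((abs_nonneg _).trans (hC x))
  obtain ⟨i1, e1⟩ := aux_cond Pr P X hX hXlaw Z hZ (fun x => v x * m x) (fun x => r x / v x)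
    (hv.mul hm) (hr.div hv) hcZ _ hb
  obtain ⟨i2, e2⟩ := aux_cond Pr P X hX hXlaw I hI v (fun x => mh x * (r x / v x))
    hv (hmh.mul (hr.div hv)) hcI _ hb2
  refine ⟨i1.sub i2, ?_⟩
  rw [integral_sub i1 i2, e1, e2]
  congr 1 <;>
  · refine integral_congr_ae (.of_forall fun x => ?_)
    have : v x ≠ 0 := (hc.trans_le (hvc x)).ne'
    simp only
    field_simp

/-- Unbiasedness of the importance-weighted AIPW score: with target distribution `Q`
(density `q`) and sampling distribution `P` (density `p`), `X ∼ P`, propensity score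
`w₁` bounded in `[c, 1−c]`, conditional means `μ₁, μ₀` of the potential outcomes
`Y₁, Y₀` given `X`, conditional mean-independence of the treatment indicator, bounded
regression estimates `μh₁, μh₀` and bounded importance weight `q/p`, the AIPWIW score
has expectation `θ₀ = ∫ (μ₁ − μ₀) dQ`. -/
theorem aipwiw_unbiased
    {𝒳 : Type*} [MeasurableSpace 𝒳] (μ : Measure 𝒳) [SigmaFinite μ]
    (q p : 𝒳 → ℝ) (hqm : Measurable q) (hq0 : ∀ x, 0 ≤ q x)
    (hpm : Measurable p) (hp0 : ∀ x, 0 ≤ p x)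
    (Q P : Measure 𝒳)
    (hQ : Q = μ.withDensity fun x => ENNReal.ofReal (q x))
    (hP : P = μ.withDensity fun x => ENNReal.ofReal (p x))
    [IsProbabilityMeasure Q] [IsProbabilityMeasure P]
    (hppos : ∀ᵐ x ∂μ, 0 < q x → 0 < p x)
    (M : ℝ) (hM : ∀ᵐ x ∂P, q x / p x ≤ M)
    {Ω : Type*} {mΩ : MeasurableSpace Ω} (Pr : Measure Ω) [IsProbabilityMeasure Pr]
    (X : Ω → 𝒳) (hX : Measurable X) (hXlaw : Measure.map X Pr = P)
    (A : Ω → ℝ) (hA : Measurable A) (hA01 : ∀ ω, A ω = 0 ∨ A ω = 1)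
    (Y₁ Y₀ : Ω → ℝ) (hY₁ : Integrable Y₁ Pr) (hY₀ : Integrable Y₀ Pr)
    (w₁ : 𝒳 → ℝ) (hw₁ : Measurable w₁)
    (c : ℝ) (hc : 0 < c) (hc2 : c < 1 / 2) (hwc : ∀ x, c ≤ w₁ x ∧ w₁ x ≤ 1 - c)
    (μ₁ μ₀ : 𝒳 → ℝ) (hμ₁m : Measurable μ₁) (hμ₀m : Measurable μ₀)
    (hcondA1 : Pr[(fun ω => if A ω = 1 then (1 : ℝ) else 0) |
        MeasurableSpace.comap X inferInstance] =ᵐ[Pr] fun ω => w₁ (X ω))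
    (hcondA0 : Pr[(fun ω => if A ω = 0 then (1 : ℝ) else 0) |
        MeasurableSpace.comap X inferInstance] =ᵐ[Pr] fun ω => 1 - w₁ (X ω))
    (hcondY1 : Pr[Y₁ | MeasurableSpace.comap X inferInstance] =ᵐ[Pr] fun ω => μ₁ (X ω))
    (hcondY0 : Pr[Y₀ | MeasurableSpace.comap X inferInstance] =ᵐ[Pr] fun ω => μ₀ (X ω))
    (hci1 : Pr[(fun ω => (if A ω = 1 then (1 : ℝ) else 0) * Y₁ ω) |
        MeasurableSpace.comap X inferInstance] =ᵐ[Pr] fun ω => w₁ (X ω) * μ₁ (X ω))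
    (hci0 : Pr[(fun ω => (if A ω = 0 then (1 : ℝ) else 0) * Y₀ ω) |
        MeasurableSpace.comap X inferInstance] =ᵐ[Pr]
        fun ω => (1 - w₁ (X ω)) * μ₀ (X ω))
    (Y : Ω → ℝ)
    (hYdef : ∀ ω, Y ω = (if A ω = 1 then (1 : ℝ) else 0) * Y₁ ω
        + (if A ω = 0 then (1 : ℝ) else 0) * Y₀ ω)
    (μh₁ μh₀ : 𝒳 → ℝ) (hμh₁m : Measurable μh₁) (hμh₀m : Measurable μh₀)
    (C : ℝ) (hμh₁b : ∀ x, |μh₁ x| ≤ C) (hμh₀b : ∀ x, |μh₀ x| ≤ C)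
    (hμ₁Q : Integrable μ₁ Q) (hμ₀Q : Integrable μ₀ Q)
    (hμ₁P : Integrable (fun x => μ₁ x * (q x / p x)) P)
    (hμ₀P : Integrable (fun x => μ₀ x * (q x / p x)) P) :
    ∫ ω, (((if A ω = 1 then (1 : ℝ) else 0) * (Y ω - μh₁ (X ω)) / w₁ (X ω)
          - (if A ω = 0 then (1 : ℝ) else 0) * (Y ω - μh₀ (X ω)) / (1 - w₁ (X ω)))
            * (q (X ω) / p (X ω))
        + ∫ x, (μh₁ x - μh₀ x) ∂Q) ∂Pr
      = ∫ x, (μ₁ x - μ₀ x) ∂Q := by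
  have hmeas1 : Measurable (fun ω => if A ω = 1 then (1 : ℝ) else 0) :=
    Measurable.ite (hA (measurableSet_singleton 1)) measurable_const measurable_const
  have hmeas0 : Measurable (fun ω => if A ω = 0 then (1 : ℝ) else 0) :=
    Measurable.ite (hA (measurableSet_singleton 0)) measurable_const measurable_const
  have hb1 : ∀ ω, ‖(if A ω = 1 then (1 : ℝ) else 0)‖ ≤ 1 := by
    intro ω; split_ifs <;> simp
  have hb0 : ∀ ω, ‖(if A ω = 0 then (1 : ℝ) else 0)‖ ≤ 1 := by
    intro ω; split_ifs <;> simp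
  obtain ⟨i1, e1⟩ := aux_arm Pr P X hX hXlaw _ _
    (Integrable.of_bound hmeas1.aestronglyMeasurable 1 (.of_forall hb1))
    (hY₁.bdd_mul hmeas1.aestronglyMeasurable (.of_forall hb1))
    w₁ μ₁ μh₁ (fun x => q x / p x) hw₁ hμ₁m hμh₁m (hqm.div hpm) c hc (fun x => (hwc x).1)
    C hμh₁b M (fun x => div_nonneg (hq0 x) (hp0 x)) hM hcondA1 hci1
  obtain ⟨i0, e0⟩ := aux_arm Pr P X hX hXlaw _ _
    (Integrable.of_bound hmeas0.aestronglyMeasurable 1 (.of_forall hb0))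
    (hY₀.bdd_mul hmeas0.aestronglyMeasurable (.of_forall hb0))
    (fun x => 1 - w₁ x) μ₀ μh₀ (fun x => q x / p x) (hw₁.const_sub 1) hμ₀m hμh₀m
    (hqm.div hpm) c hc (fun x => by linarith [(hwc x).2])
    C hμh₀b M (fun x => div_nonneg (hq0 x) (hp0 x)) hM hcondA0 hci0
  have key : ∀ f : 𝒳 → ℝ, ∫ x, f x * (q x / p x) ∂P = ∫ x, f x ∂Q := by
    intro f
    rw [hP, hQ]
    exact aux_density μ q p hqm hq0 hpm hp0 hppos f
  rw [key, key] at e1 e0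
  have j1 : Integrable μh₁ Q := Integrable.of_bound hμh₁m.aestronglyMeasurable C (.of_forall hμh₁b)
  have j0 : Integrable μh₀ Q := Integrable.of_bound hμh₀m.aestronglyMeasurable C (.of_forall hμh₀b)
  rw [integral_sub j1 j0, integral_sub hμ₁Q hμ₀Q]
  have hsplit := integral_add (i1.sub i0)
    (integrable_const (μ := Pr) (∫ x, μh₁ x ∂Q - ∫ x, μh₀ x ∂Q))
  have hs2 := integral_sub i1 i0
  simp only [Pi.sub_apply] at hsplit
  rw [hs2, e1, e0] at hsplit
  simp only [integral_const, probReal_univ, one_smul] at hsplit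
  trans
  swap
  · refine hsplit.trans ?_
    ring
  · refine integral_congr_ae (.of_forall fun ω => ?_)
    simp only [hYdef]
    rcases hA01 ω with h | h <;> simp [h] <;> ring
end

section
/- Let (Y_t, A_t, X_t), t = 1,…,T, be i.i.d. with X_t ∼ P (density p), A_t | X_t Bernoulli with propensity score w(1|X_t) ∈ [c, 1−c], and potential outcomes with conditional means μ₀(a)(X_t) and variances σ₀²(a)(X_t) conditionally independent of A_t given X_t; let X̃_s, s = 1,…,S, be i.i.d. with X̃_s ∼ Q (density q), independent of the first sample. Assume q/p bounded and all relevant second moments finite, and let θ₀(x) = μ₀(1)(x) − μ₀(0)(x) and θ₀ = E_{X̃∼Q}[θ₀(X̃)]. Then the efficient influence function ψ = (1/T) Σ_{t=1}^T (1[A_t=1](Y_t − μ₀(1)(X_t))/w(1|X_t) − 1[A_t=0](Y_t − μ₀(0)(X_t))/w(0|X_t)) · q(X_t)/p(X_t) + (1/S) Σ_{s=1}^S (θ₀(X̃_s) − θ₀) has mean zero and variance Var(ψ) = (1/T) · E_{X∼P}[(σ₀²(1)(X)/w(1|X) + σ₀²(0)(X)/w(0|X)) · q(X)²/p(X)²]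 + (1/S) · Var_{X̃∼Q}(θ₀(X̃)). Consequently T·Var(ψ) converges to the semiparametric efficiency bound τ(w,p) as S → ∞ (for fixed T). -/
open MeasureTheory ProbabilityTheory

lemma pull_aux {𝒳 : Type*} [MeasurableSpace 𝒳] {Ω : Type*} {mΩ : MeasurableSpace Ω}
    (Pr : Measure Ω) [IsProbabilityMeasure Pr] (P : Measure 𝒳)
    (X : Ω → 𝒳) (hX : Measurable X) (hlaw : Measure.map X Pr = P)
    (Z : Ω → ℝ) (hZ : Integrable Z Pr) (g h : 𝒳 → ℝ) (hg : Measurable g) (hh : Measurable h)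
    (hc : Pr[Z | MeasurableSpace.comap X inferInstance] =ᵐ[Pr] fun ω => g (X ω))
    (hi : Integrable (fun ω => h (X ω) * Z ω) Pr) :
    Integrable (fun x => h x * g x) P ∧
      ∫ ω, h (X ω) * Z ω ∂Pr = ∫ x, h x * g x ∂P := by
  have hm : MeasurableSpace.comap X inferInstance ≤ mΩ := hX.comap_le
  have hs : StronglyMeasurable[MeasurableSpace.comap X inferInstance] (fun ω => h (X ω)) :=
    (hh.comp (comap_measurable X)).stronglyMeasurable
  have h1 : Pr[(fun ω => h (X ω)) * Z | MeasurableSpace.comap X inferInstance]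
      =ᵐ[Pr] fun ω => h (X ω) * g (X ω) := by
    refine (condExp_mul_of_stronglyMeasurable_left hs hi hZ).trans ?_
    filter_upwards [hc] with ω hω
    simp [hω]
  have hi2 : Integrable (fun ω => h (X ω) * g (X ω)) Pr :=
    (integrable_condExp (m := MeasurableSpace.comap X inferInstance) (μ := Pr)
      (f := (fun ω => h (X ω)) * Z)).congr h1
  have hae : AEStronglyMeasurable (fun x => h x * g x) (Measure.map X Pr) :=
    (hh.mul hg).aestronglyMeasurable
  subst hlaw
  refine ⟨(integrable_map_measure hae hX.aemeasurable).2 hi2, ?_⟩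
  rw [integral_map hX.aemeasurable hae, ← integral_congr_ae h1, integral_condExp hm]
  rfl

lemma score_aux {𝒳 : Type*} [MeasurableSpace 𝒳] {Ω : Type*} {mΩ : MeasurableSpace Ω}
    (Pr : Measure Ω) [IsProbabilityMeasure Pr] (P : Measure 𝒳)
    (X : Ω → 𝒳) (hX : Measurable X) (hlaw : Measure.map X Pr = P)
    (D Y : Ω → ℝ) (m v h : 𝒳 → ℝ) (C : ℝ)
    (hDm : Measurable D) (hYm : Measurable Y) (hm : Measurable m) (hv : Measurable v)
    (hh : Measurable h) (hD : ∀ ω, D ω = 0 ∨ D ω = 1) (hY : MemLp Y 2 Pr)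
    (hC : ∀ᵐ ω ∂Pr, |h (X ω)| ≤ C)
    (hmean : Pr[Y | MeasurableSpace.comap X inferInstance] =ᵐ[Pr] fun ω => m (X ω))
    (h1 : Pr[(fun ω => D ω * (Y ω - m (X ω))) | MeasurableSpace.comap X inferInstance]
      =ᵐ[Pr] fun _ => (0 : ℝ))
    (h2 : Pr[(fun ω => D ω * (Y ω - m (X ω)) ^ 2) | MeasurableSpace.comap X inferInstance]
      =ᵐ[Pr] fun ω => v (X ω)) :
    MemLp (fun ω => h (X ω) * (D ω * (Y ω - m (X ω)))) 2 Pr ∧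
    ∫ ω, h (X ω) * (D ω * (Y ω - m (X ω))) ∂Pr = 0 ∧
    Integrable (fun x => h x ^ 2 * v x) P ∧
    ∫ ω, (h (X ω) * (D ω * (Y ω - m (X ω)))) ^ 2 ∂Pr = ∫ x, h x ^ 2 * v x ∂P := by
  have hmX : MemLp (fun ω => m (X ω)) 2 Pr := (memLp_congr_ae hmean).1 (hY.condExp (by norm_num))
  have hR : MemLp (fun ω => Y ω - m (X ω)) 2 Pr := hY.sub hmX
  have hDR : MemLp (fun ω => D ω * (Y ω - m (X ω))) 2 Pr := by
    refine hR.of_le (by fun_prop) (Filter.Eventually.of_forall fun ω => ?_)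
    rcases hD ω with h | h <;> simp [h]
  have hW : MemLp (fun ω => h (X ω) * (D ω * (Y ω - m (X ω)))) 2 Pr := by
    refine hDR.of_le_mul (c := C) (by fun_prop) ?_
    filter_upwards [hC] with ω hω
    rw [norm_mul]
    exact mul_le_mul_of_nonneg_right hω (norm_nonneg _)
  have hsq : ∀ ω, (h (X ω) * (D ω * (Y ω - m (X ω)))) ^ 2
      = h (X ω) ^ 2 * (D ω * (Y ω - m (X ω)) ^ 2) := by
    intro ω
    rcases hD ω with h | h <;> rw [h] <;> ring
  have hsq' : ∀ ω, (D ω * (Y ω - m (X ω))) ^ 2 = D ω * (Y ω - m (X ω)) ^ 2 := by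
    intro ω
    rcases hD ω with h | h <;> rw [h] <;> ring
  have hZ2 : Integrable (fun ω => D ω * (Y ω - m (X ω)) ^ 2) Pr := by
    have := hDR.integrable_sq
    simpa only [hsq'] using this
  have hi2 : Integrable (fun ω => h (X ω) ^ 2 * (D ω * (Y ω - m (X ω)) ^ 2)) Pr := by
    have := hW.integrable_sq
    simpa only [hsq] using this
  have a1 := pull_aux Pr P X hX hlaw _ (hDR.integrable (by norm_num)) (fun _ => 0) h
    measurable_const hh h1 (hW.integrable (by norm_num))
  have a2 := pull_aux Pr P X hX hlaw _ hZ2 v (fun x => h x ^ 2) hv (hh.pow_const 2) h2 hi2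
  refine ⟨hW, by simpa using a1.2, a2.1, ?_⟩
  simp only [hsq]
  exact a2.2

/-- Mean and variance of the efficient influence function under the stratified sampling
scheme: with `T` i.i.d. experimental units `(Y_t, A_t, X_t)`, `X_t ∼ P` (density `p`),
and `S` i.i.d. evaluation covariates `X̃_s ∼ Q` (density `q`), all jointly independent,
the influence function
`ψ = (1/T) ∑_t score_t + (1/S) ∑_s (θ₀(X̃_s) − θ₀)` has mean zero and variance
`(1/T)·E_P[(σ₁²/w₁ + σ₀²/(1−w₁))(q/p)²] + (1/S)·Var_Q(θ₀(·))`; consequently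
`T·Var(ψ)` tends to the semiparametric efficiency bound
`τ(w,p) = E_Q[(σ₁²/w₁ + σ₀²/(1−w₁))(q/p)]` as `S → ∞` for fixed `T`. -/
theorem influence_function_mean_variance
    {𝒳 : Type*} [MeasurableSpace 𝒳] (μ : Measure 𝒳) [SigmaFinite μ]
    (q p : 𝒳 → ℝ) (hqm : Measurable q) (hq0 : ∀ x, 0 ≤ q x)
    (hpm : Measurable p) (hp0 : ∀ x, 0 ≤ p x)
    (Q P : Measure 𝒳)
    (hQ : Q = μ.withDensity fun x => ENNReal.ofReal (q x))
    (hP : P = μ.withDensity fun x => ENNReal.ofReal (p x))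
    [IsProbabilityMeasure Q] [IsProbabilityMeasure P]
    (hppos : ∀ᵐ x ∂μ, 0 < q x → 0 < p x)
    (M : ℝ) (hM : ∀ᵐ x ∂P, q x / p x ≤ M)
    {Ω : Type*} {mΩ : MeasurableSpace Ω} (Pr : Measure Ω) [IsProbabilityMeasure Pr]
    (T S : ℕ) (hT : 0 < T) (hS : 0 < S)
    (X : Fin T → Ω → 𝒳) (A : Fin T → Ω → ℝ) (Y₁ Y₀ Y : Fin T → Ω → ℝ)
    (Xt : Fin S → Ω → 𝒳)
    (w₁ μ₁ μ₀ σ₁sq σ₀sq : 𝒳 → ℝ)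
    (hw₁m : Measurable w₁) (hμ₁m : Measurable μ₁) (hμ₀m : Measurable μ₀)
    (hσ₁m : Measurable σ₁sq) (hσ₀m : Measurable σ₀sq)
    (c : ℝ) (hc : 0 < c) (hc2 : c < 1 / 2) (hwc : ∀ x, c ≤ w₁ x ∧ w₁ x ≤ 1 - c)
    (hXm : ∀ t, Measurable (X t)) (hAm : ∀ t, Measurable (A t))
    (hY₁m : ∀ t, Measurable (Y₁ t)) (hY₀m : ∀ t, Measurable (Y₀ t))
    (hXtm : ∀ s, Measurable (Xt s))
    (hXlaw : ∀ t, Measure.map (X t) Pr = P)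
    (hXtlaw : ∀ s, Measure.map (Xt s) Pr = Q)
    (hA01 : ∀ t ω, A t ω = 0 ∨ A t ω = 1)
    (hYdef : ∀ t ω, Y t ω = (if A t ω = 1 then (1 : ℝ) else 0) * Y₁ t ω
        + (if A t ω = 0 then (1 : ℝ) else 0) * Y₀ t ω)
    (hY₁sq : ∀ t, MemLp (Y₁ t) 2 Pr) (hY₀sq : ∀ t, MemLp (Y₀ t) 2 Pr)
    (hcondA1 : ∀ t, Pr[(fun ω => if A t ω = 1 then (1 : ℝ) else 0) |
        MeasurableSpace.comap (X t) inferInstance] =ᵐ[Pr] fun ω => w₁ (X t ω))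
    (hcondA0 : ∀ t, Pr[(fun ω => if A t ω = 0 then (1 : ℝ) else 0) |
        MeasurableSpace.comap (X t) inferInstance] =ᵐ[Pr] fun ω => 1 - w₁ (X t ω))
    (hmean1 : ∀ t, Pr[Y₁ t | MeasurableSpace.comap (X t) inferInstance]
        =ᵐ[Pr] fun ω => μ₁ (X t ω))
    (hmean0 : ∀ t, Pr[Y₀ t | MeasurableSpace.comap (X t) inferInstance]
        =ᵐ[Pr] fun ω => μ₀ (X t ω))
    (hvar1 : ∀ t, Pr[(fun ω => (Y₁ t ω - μ₁ (X t ω)) ^ 2) |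
        MeasurableSpace.comap (X t) inferInstance] =ᵐ[Pr] fun ω => σ₁sq (X t ω))
    (hvar0 : ∀ t, Pr[(fun ω => (Y₀ t ω - μ₀ (X t ω)) ^ 2) |
        MeasurableSpace.comap (X t) inferInstance] =ᵐ[Pr] fun ω => σ₀sq (X t ω))
    (hci1m : ∀ t, Pr[(fun ω =>
          (if A t ω = 1 then (1 : ℝ) else 0) * (Y₁ t ω - μ₁ (X t ω))) |
        MeasurableSpace.comap (X t) inferInstance] =ᵐ[Pr] fun _ => (0 : ℝ))
    (hci0m : ∀ t, Pr[(fun ω =>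
          (if A t ω = 0 then (1 : ℝ) else 0) * (Y₀ t ω - μ₀ (X t ω))) |
        MeasurableSpace.comap (X t) inferInstance] =ᵐ[Pr] fun _ => (0 : ℝ))
    (hci1v : ∀ t, Pr[(fun ω =>
          (if A t ω = 1 then (1 : ℝ) else 0) * (Y₁ t ω - μ₁ (X t ω)) ^ 2) |
        MeasurableSpace.comap (X t) inferInstance] =ᵐ[Pr]
        fun ω => w₁ (X t ω) * σ₁sq (X t ω))
    (hci0v : ∀ t, Pr[(fun ω =>
          (if A t ω = 0 then (1 : ℝ) else 0) * (Y₀ t ω - μ₀ (X t ω)) ^ 2) |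
        MeasurableSpace.comap (X t) inferInstance] =ᵐ[Pr]
        fun ω => (1 - w₁ (X t ω)) * σ₀sq (X t ω))
    (hindep : iIndepFun
      (β := fun i : Fin T ⊕ Fin S => Sum.elim (fun _ => ℝ × ℝ × ℝ × 𝒳) (fun _ => 𝒳) i)
      (m := fun i => Sum.rec (fun _ => (inferInstance : MeasurableSpace (ℝ × ℝ × ℝ × 𝒳)))
        (fun _ => (inferInstance : MeasurableSpace 𝒳)) i)
      (fun i => Sum.rec (fun t ω => (Y₁ t ω, Y₀ t ω, A t ω, X t ω))
        (fun s => Xt s) i) Pr)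
    (hfin : Integrable
        (fun x => (σ₁sq x / w₁ x + σ₀sq x / (1 - w₁ x)) * (q x / p x) ^ 2) P)
    (hθ : MemLp (fun x => μ₁ x - μ₀ x) 2 Q)
    (ψ : Ω → ℝ)
    (hψ : ∀ ω, ψ ω =
      (1 / (T : ℝ)) * ∑ t : Fin T,
        (((if A t ω = 1 then (1 : ℝ) else 0) * (Y t ω - μ₁ (X t ω)) / w₁ (X t ω)
          - (if A t ω = 0 then (1 : ℝ) else 0) * (Y t ω - μ₀ (X t ω)) / (1 - w₁ (X t ω)))
          * (q (X t ω) / p (X t ω)))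
      + (1 / (S : ℝ)) * ∑ s : Fin S,
          (μ₁ (Xt s ω) - μ₀ (Xt s ω) - ∫ x, (μ₁ x - μ₀ x) ∂Q)) :
    (∫ ω, ψ ω ∂Pr = 0) ∧
    (variance ψ Pr =
      (1 / (T : ℝ)) * ∫ x, (σ₁sq x / w₁ x + σ₀sq x / (1 - w₁ x)) * (q x / p x) ^ 2 ∂P
      + (1 / (S : ℝ)) * variance (fun x => μ₁ x - μ₀ x) Q) ∧
    Filter.Tendsto
      (fun S' : ℕ => (T : ℝ) *
        ((1 / (T : ℝ)) * ∫ x, (σ₁sq x / w₁ x + σ₀sq x / (1 - w₁ x)) * (q x / p x) ^ 2 ∂P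
          + (1 / (S' : ℝ)) * variance (fun x => μ₁ x - μ₀ x) Q))
      Filter.atTop
      (nhds (∫ x, (σ₁sq x / w₁ x + σ₀sq x / (1 - w₁ x)) * (q x / p x) ∂Q)) := by
  classical
  set θ₀ : ℝ := ∫ x, (μ₁ x - μ₀ x) ∂Q with hθ₀
  have hTne : (T : ℝ) ≠ 0 := by exact_mod_cast hT.ne'
  have hSne : (S : ℝ) ≠ 0 := by exact_mod_cast hS.ne'
  have hwpos : ∀ x, 0 < w₁ x := fun x => lt_of_lt_of_le hc (hwc x).1
  have hwpos' : ∀ x, 0 < 1 - w₁ x := fun x => by linarith [(hwc x).2]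
  -- the two weights
  set h₁ : 𝒳 → ℝ := fun x => q x / p x / w₁ x with hh₁
  set h₀ : 𝒳 → ℝ := fun x => q x / p x / (1 - w₁ x) with hh₀
  have hh₁m : Measurable h₁ := (hqm.div hpm).div hw₁m
  have hh₀m : Measurable h₀ := (hqm.div hpm).div (measurable_const.sub hw₁m)
  have hbd : ∀ t, ∀ᵐ ω ∂Pr, q (X t ω) / p (X t ω) ≤ M := by
    intro t
    have : ∀ᵐ x ∂(Measure.map (X t) Pr), q x / p x ≤ M := by rw [hXlaw t]; exact hM
    exact ae_of_ae_map (hXm t).aemeasurable this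
  have hgen : ∀ r u : ℝ, 0 ≤ r → r ≤ M → c ≤ u → |r / u| ≤ M / c := by
    intro r u h0 h1 h2
    have hu : 0 < u := lt_of_lt_of_le hc h2
    rw [abs_of_nonneg (div_nonneg h0 hu.le)]
    exact div_le_div₀ (h0.trans h1) h1 hc h2
  have hb₁ : ∀ t, ∀ᵐ ω ∂Pr, |h₁ (X t ω)| ≤ M / c := by
    intro t
    filter_upwards [hbd t] with ω hω
    exact hgen _ _ (div_nonneg (hq0 _) (hp0 _)) hω (hwc _).1
  have hb₀ : ∀ t, ∀ᵐ ω ∂Pr, |h₀ (X t ω)| ≤ M / c := by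
    intro t
    filter_upwards [hbd t] with ω hω
    exact hgen _ _ (div_nonneg (hq0 _) (hp0 _)) hω (by linarith [(hwc (X t ω)).2])
  have hI1m : Measurable (fun a : ℝ => if a = 1 then (1 : ℝ) else 0) :=
    Measurable.ite (measurableSet_singleton 1) measurable_const measurable_const
  have hI0m : Measurable (fun a : ℝ => if a = 0 then (1 : ℝ) else 0) :=
    Measurable.ite (measurableSet_singleton 0) measurable_const measurable_const
  have s₁ := fun t => score_aux Pr P (X t) (hXm t) (hXlaw t)
    (fun ω => if A t ω = 1 then (1 : ℝ) else 0) (Y₁ t) μ₁ (fun x => w₁ x * σ₁sq x) h₁ (M / c)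
    (hI1m.comp (hAm t)) (hY₁m t) hμ₁m (hw₁m.mul hσ₁m) hh₁m
    (fun ω => by by_cases h : A t ω = 1 <;> simp [h]) (hY₁sq t) (hb₁ t) (hmean1 t)
    (hci1m t) (hci1v t)
  have s₀ := fun t => score_aux Pr P (X t) (hXm t) (hXlaw t)
    (fun ω => if A t ω = 0 then (1 : ℝ) else 0) (Y₀ t) μ₀ (fun x => (1 - w₁ x) * σ₀sq x) h₀
    (M / c)
    (hI0m.comp (hAm t)) (hY₀m t) hμ₀m ((measurable_const.sub hw₁m).mul hσ₀m) hh₀m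
    (fun ω => by by_cases h : A t ω = 0 <;> simp [h]) (hY₀sq t) (hb₀ t) (hmean0 t)
    (hci0m t) (hci0v t)
  set g₁ : ℝ × ℝ × ℝ × 𝒳 → ℝ := fun z =>
    h₁ z.2.2.2 * ((if z.2.2.1 = 1 then (1 : ℝ) else 0) * (z.1 - μ₁ z.2.2.2))
      - h₀ z.2.2.2 * ((if z.2.2.1 = 0 then (1 : ℝ) else 0) * (z.2.1 - μ₀ z.2.2.2)) with hg₁
  have hX4 : Measurable (fun z : ℝ × ℝ × ℝ × 𝒳 => z.2.2.2) := by fun_prop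
  have hA4 : Measurable (fun z : ℝ × ℝ × ℝ × 𝒳 => z.2.2.1) := by fun_prop
  have hg₁m : Measurable g₁ := by
    refine Measurable.sub ?_ ?_
    · exact (hh₁m.comp hX4).mul ((hI1m.comp hA4).mul (measurable_fst.sub (hμ₁m.comp hX4)))
    · exact (hh₀m.comp hX4).mul ((hI0m.comp hA4).mul
        ((measurable_fst.comp measurable_snd).sub (hμ₀m.comp hX4)))
  set W : Fin T → Ω → ℝ := fun t ω => g₁ (Y₁ t ω, Y₀ t ω, A t ω, X t ω) with hW
  set V : Fin S → Ω → ℝ := fun s ω => μ₁ (Xt s ω) - μ₀ (Xt s ω) - θ₀ with hV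
  have hWL : ∀ t, MemLp (W t) 2 Pr := fun t => (s₁ t).1.sub (s₀ t).1
  have hWmean : ∀ t, ∫ ω, W t ω ∂Pr = 0 := by
    intro t
    have := integral_sub ((s₁ t).1.integrable (by norm_num)) ((s₀ t).1.integrable (by norm_num))
    rw [(s₁ t).2.1, (s₀ t).2.1, sub_zero] at this
    exact this
  have hWsq : ∀ t, ∫ ω, W t ω ^ 2 ∂Pr
      = ∫ x, (σ₁sq x / w₁ x + σ₀sq x / (1 - w₁ x)) * (q x / p x) ^ 2 ∂P := by
    intro t
    have e1 : ∀ ω, W t ω ^ 2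
        = (h₁ (X t ω) * ((if A t ω = 1 then (1 : ℝ) else 0) * (Y₁ t ω - μ₁ (X t ω)))) ^ 2
        + (h₀ (X t ω) * ((if A t ω = 0 then (1 : ℝ) else 0) * (Y₀ t ω - μ₀ (X t ω)))) ^ 2 := by
      intro ω
      rcases hA01 t ω with h | h <;> simp [hW, hg₁, h]
    simp only [e1]
    rw [integral_add (s₁ t).1.integrable_sq (s₀ t).1.integrable_sq, (s₁ t).2.2.2,
      (s₀ t).2.2.2, ← integral_add (s₁ t).2.2.1 (s₀ t).2.2.1]
    refine integral_congr_ae (Filter.Eventually.of_forall fun x => ?_)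
    have a1 := (hwpos x).ne'
    have a0 := (hwpos' x).ne'
    simp only [hh₁, hh₀, div_pow _ (w₁ x), div_pow _ (1 - w₁ x)]
    generalize q x / p x = r
    field_simp
  have hθ' : ∀ s, MemLp (fun ω => μ₁ (Xt s ω) - μ₀ (Xt s ω)) 2 Pr := by
    intro s
    rw [← hXtlaw s] at hθ
    exact hθ.comp_of_map (hXtm s).aemeasurable
  have hVL : ∀ s, MemLp (V s) 2 Pr := fun s => (hθ' s).sub (memLp_const θ₀)
  have hVmean : ∀ s, ∫ ω, V s ω ∂Pr = 0 := by
    intro s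
    simp only [hV]
    rw [integral_sub ((hθ' s).integrable (by norm_num)) (integrable_const _)]
    have : ∫ x, (μ₁ x - μ₀ x) ∂(Measure.map (Xt s) Pr)
        = ∫ ω, (μ₁ (Xt s ω) - μ₀ (Xt s ω)) ∂Pr :=
      integral_map (hXtm s).aemeasurable (hμ₁m.sub hμ₀m).aestronglyMeasurable
    rw [← this, hXtlaw s]
    simp [hθ₀]
  have hVvar : ∀ s, variance (V s) Pr = variance (fun x => μ₁ x - μ₀ x) Q := by
    intro s
    simp only [hV]
    rw [variance_sub_const (hθ' s).aestronglyMeasurable, ← hXtlaw s]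
    exact (variance_map (hμ₁m.sub hμ₀m).aemeasurable (hXtm s).aemeasurable).symm
  have hWvar : ∀ t, variance (W t) Pr
      = ∫ x, (σ₁sq x / w₁ x + σ₀sq x / (1 - w₁ x)) * (q x / p x) ^ 2 ∂P := fun t => by
    rw [variance_of_integral_eq_zero (hWL t).aestronglyMeasurable.aemeasurable (hWmean t), hWsq]
  -- combined family
  set Z : Fin T ⊕ Fin S → Ω → ℝ := fun i => Sum.elim
    (fun t ω => (1 / (T : ℝ)) * W t ω) (fun s ω => (1 / (S : ℝ)) * V s ω) i with hZ
  have hZL : ∀ i, MemLp (Z i) 2 Pr := by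
    rintro (t | s)
    · exact (hWL t).const_mul _
    · exact (hVL s).const_mul _
  have hZmean : ∀ i, ∫ ω, Z i ω ∂Pr = 0 := by
    rintro (t | s)
    · simp [hZ, integral_const_mul, hWmean]
    · simp [hZ, integral_const_mul, hVmean]
  have hψZ : ψ = ∑ i, Z i := by
    funext ω
    rw [hψ ω, Finset.sum_apply, Fintype.sum_sum_type, Finset.mul_sum, Finset.mul_sum]
    congr 1
    refine Finset.sum_congr rfl fun t _ => ?_
    simp only [hZ, Sum.elim_inl]
    congr 1
    rcases hA01 t ω with h | h
    · simp [hW, hg₁, hYdef, h, hh₀]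
      ring
    · simp [hW, hg₁, hYdef, h, hh₁]
      ring
  have hind : iIndepFun Z Pr := by
    have := hindep.comp (γ := fun _ => ℝ) (mγ := fun _ => inferInstance)
      (fun i => Sum.rec (fun t z => (1 / (T : ℝ)) * g₁ z)
        (fun s x => (1 / (S : ℝ)) * (μ₁ x - μ₀ x - θ₀)) i) (by
        rintro (t | s)
        · exact hg₁m.const_mul _
        · exact ((hμ₁m.sub hμ₀m).sub_const _).const_mul _)
    convert this using 1
    funext i
    rcases i with t | s <;> rfl
  refine ⟨?_, ?_, ?_⟩
  · rw [hψZ]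
    simp only [Finset.sum_apply]
    rw [integral_finsetSum _ fun i _ => (hZL i).integrable (by norm_num)]
    simp [hZmean]
  · rw [hψZ, IndepFun.variance_sum (fun i _ => hZL i)
      (fun i _ j _ hij => hind.indepFun hij), Fintype.sum_sum_type]
    simp only [hZ, Sum.elim_inl, Sum.elim_inr, variance_const_mul, hWvar, hVvar,
      Finset.sum_const, Finset.card_univ, Fintype.card_fin, nsmul_eq_mul]
    field_simp
  · have e : ∫ x, (σ₁sq x / w₁ x + σ₀sq x / (1 - w₁ x)) * (q x / p x) ∂Q
        = ∫ x, (σ₁sq x / w₁ x + σ₀sq x / (1 - w₁ x)) * (q x / p x) ^ 2 ∂P := by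
      rw [hQ, hP, integral_withDensity_eq_integral_toReal_smul hqm.ennreal_ofReal (by simp),
        integral_withDensity_eq_integral_toReal_smul hpm.ennreal_ofReal (by simp)]
      refine integral_congr_ae (Filter.Eventually.of_forall fun x => ?_)
      simp only [ENNReal.toReal_ofReal (hq0 x), ENNReal.toReal_ofReal (hp0 x), smul_eq_mul]
      have : q x * (q x / p x) = p x * (q x / p x) ^ 2 := by
        by_cases h : p x = 0
        · simp [h]
        · field_simp
      linear_combination (σ₁sq x / w₁ x + σ₀sq x / (1 - w₁ x)) * this
    rw [e]
    have hlim := ((tendsto_one_div_atTop_nhds_zero_nat (𝕜 := ℝ)).mul_const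
      (variance (fun x => μ₁ x - μ₀ x) Q)).const_add ((1 / (T : ℝ)) *
        ∫ x, (σ₁sq x / w₁ x + σ₀sq x / (1 - w₁ x)) * (q x / p x) ^ 2 ∂P)
    have := hlim.const_mul (T : ℝ)
    convert this using 2
    field_simp
    ring
end

section
/- Let K ≥ 2, let (𝒳, μ) be a measure space, let σ_1, …, σ_K : 𝒳 → (0,∞) be measurable, and let q : 𝒳 → [0,∞) be a measurable probability density with respect to μ with Σ_a σ_a · q μ-integrable. Then for every measurable w : 𝒳 → interior of the K-simplex and every measurable probability density p : 𝒳 → [0,∞) with p > 0 μ-a.e. on {q > 0}, it holds that ∫ (Σ_{a=1}^K σ_a(x)²/w_a(x)) · q(x)²/p(x) dμ(x) ≥ (∫ (Σ_{a=1}^K σ_a(x)) q(x) dμ(x))², and the bound is attained by w_a*(x) = σ_a(x)/Σ_b σ_b(x) and p*(x) = (Σ_a σ_a(x)) q(x) / ∫ (Σ_a σ_a) q dμ (assuming the normalizing integral is positive and finite). -/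
open MeasureTheory Finset

/-- K-treatment joint minimization of the semiparametric efficiency bound: for every
measurable treatment-assignment rule `w` valued in the interior of the `K`-simplex and
every probability density `p` positive a.e. on `{q > 0}`,
`∫ (∑ₐ σₐ²/wₐ) q²/p dμ ≥ (∫ (∑ₐ σₐ) q dμ)²`, and the bound is attained at
`wₐ*(x) = σₐ(x)/∑_b σ_b(x)` and `p*(x) = (∑ₐ σₐ(x)) q(x) / ∫ (∑ₐ σₐ) q dμ`. -/
theorem K_treatment_joint_minimization
    (K : ℕ) (hK : 2 ≤ K)
    {𝒳 : Type*} [MeasurableSpace 𝒳] (μ : Measure 𝒳)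
    (σ : Fin K → 𝒳 → ℝ) (hσm : ∀ a, Measurable (σ a)) (hσp : ∀ a x, 0 < σ a x)
    (q : 𝒳 → ℝ) (hqm : Measurable q) (hq0 : ∀ x, 0 ≤ q x)
    (hqint : Integrable q μ) (hq1 : ∫ x, q x ∂μ = 1)
    (hint : Integrable (fun x => (∑ a, σ a x) * q x) μ)
    (hpos : 0 < ∫ x, (∑ a, σ a x) * q x ∂μ) :
    (∀ w : 𝒳 → Fin K → ℝ, (∀ a, Measurable fun x => w x a) →
      (∀ x, (∀ a, 0 < w x a) ∧ (∑ a, w x a) = 1) →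
      ∀ p : 𝒳 → ℝ, Measurable p → (∀ x, 0 ≤ p x) → Integrable p μ →
        (∫ x, p x ∂μ = 1) → (∀ᵐ x ∂μ, 0 < q x → 0 < p x) →
        ENNReal.ofReal ((∫ x, (∑ a, σ a x) * q x ∂μ) ^ 2) ≤
          ∫⁻ x, ENNReal.ofReal ((∑ a, σ a x ^ 2 / w x a) * (q x ^ 2 / p x)) ∂μ) ∧
    (∫ x, (∑ a, σ a x) * q x / (∫ y, (∑ a, σ a y) * q y ∂μ) ∂μ = 1) ∧
    (∫ x, (∑ a, σ a x ^ 2 / (σ a x / ∑ b, σ b x)) *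
        (q x ^ 2 / ((∑ a, σ a x) * q x / (∫ y, (∑ a, σ a y) * q y ∂μ))) ∂μ =
      (∫ x, (∑ a, σ a x) * q x ∂μ) ^ 2) := by
  have hne : (univ : Finset (Fin K)).Nonempty := ⟨⟨0, by omega⟩, mem_univ _⟩
  have hS : ∀ x, 0 < ∑ a, σ a x := fun x => Finset.sum_pos (fun a _ => hσp a x) hne
  set I := ∫ x, (∑ a, σ a x) * q x ∂μ with hI
  refine ⟨?_, ?_, ?_⟩
  · intro w hwm hw p hpm hp0 hpi hp1 hqp
    have hgi : Integrable (fun x => 2 * I * ((∑ a, σ a x) * q x) - I ^ 2 * p x) μ :=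
      (hint.const_mul _).sub (hpi.const_mul _)
    have hg : ∫ x, (2 * I * ((∑ a, σ a x) * q x) - I ^ 2 * p x) ∂μ = I ^ 2 := by
      rw [integral_sub (hint.const_mul _) (hpi.const_mul _), integral_const_mul,
        integral_const_mul, hp1, ← hI]
      ring
    have hle : I ^ 2 ≤ ∫ x, max (2 * I * ((∑ a, σ a x) * q x) - I ^ 2 * p x) 0 ∂μ := by
      refine hg.symm.le.trans ?_
      exact integral_mono hgi hgi.pos_part (fun x => le_max_left _ _)
    refine (ENNReal.ofReal_le_ofReal hle).trans ?_
    rw [ofReal_integral_eq_lintegral_ofReal hgi.pos_part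
      (Filter.Eventually.of_forall fun x => le_max_right _ _)]
    refine lintegral_mono_ae ?_
    filter_upwards [hqp] with x hx
    apply ENNReal.ofReal_le_ofReal
    have hsum : (∑ a, σ a x) ^ 2 ≤ ∑ a, σ a x ^ 2 / w x a := by
      have h := Finset.sq_sum_div_le_sum_sq_div univ (fun a => σ a x)
        (g := fun a => w x a) (fun a _ => (hw x).1 a)
      simpa [(hw x).2] using h
    have hqp0 : 0 ≤ q x ^ 2 / p x := div_nonneg (sq_nonneg _) (hp0 x)
    refine max_le ?_ (mul_nonneg ((sq_nonneg _).trans hsum) hqp0)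
    refine le_trans ?_ (mul_le_mul_of_nonneg_right hsum hqp0)
    rcases (hp0 x).eq_or_lt with h0 | h0
    · have hq : q x = 0 := by
        by_contra hne
        have := hx (lt_of_le_of_ne (hq0 x) (Ne.symm hne))
        linarith
      simp [hq, ← h0]
    · rw [← mul_div_assoc, le_div_iff₀ h0]
      nlinarith [sq_nonneg ((∑ a, σ a x) * q x - I * p x)]
  · rw [integral_div, ← hI, div_self hpos.ne']
  · have : ∀ x, (∑ a, σ a x ^ 2 / (σ a x / ∑ b, σ b x)) *
        (q x ^ 2 / ((∑ a, σ a x) * q x / I)) = I * ((∑ a, σ a x) * q x) := by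
      intro x
      have h1 : (∑ a, σ a x ^ 2 / (σ a x / ∑ b, σ b x)) = (∑ a, σ a x) ^ 2 := by
        rw [sq (∑ a, σ a x), Finset.sum_mul]
        refine Finset.sum_congr rfl fun a _ => ?_
        have := (hσp a x).ne'
        have := (hS x).ne'
        field_simp
      rw [h1]
      have h2 := (hS x).ne'
      have h3 := hpos.ne'
      by_cases hq : q x = 0
      · simp [hq]
      · field_simp
    simp_rw [this]
    rw [integral_const_mul, ← hI, sq]
end
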